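/- Under Assumption 1, for every i ∈ [m]: if B ⊆ [m]∖{i} is a causal Markov blanket of X_i and A ⊆ [m]∖{i} is a causal Markov boundary of X_i, then A ⊆ B. -/

import Mathlib

open Finset

/-- Probability of an event under the probability mass function `p` on a finite space. -/
noncomputable def pr {Ω : Type} [Fintype Ω] (p : Ω → ℝ) (E : Set Ω) : ℝ :=
  ∑ ω : Ω, E.indicator p ω

/-- Shannon conditional mutual information `I(A ; B | C)` of finite-valued random variables
on a finite probability space with pmf `p` (terms with vanishing probability contribute `0`,
by the conventions `Real.log 0 = 0`, `x / 0 = 0`). -/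
noncomputable def cmi {Ω α β γ : Type} [Fintype Ω] [Fintype α] [Fintype β] [Fintype γ]
    (p : Ω → ℝ) (A : Ω → α) (B : Ω → β) (C : Ω → γ) : ℝ :=
  ∑ a : α, ∑ b : β, ∑ c : γ,
    pr p {ω | A ω = a ∧ B ω = b ∧ C ω = c} *
      Real.log (pr p {ω | A ω = a ∧ B ω = b ∧ C ω = c} * pr p {ω | C ω = c} /
        (pr p {ω | A ω = a ∧ C ω = c} * pr p {ω | B ω = b ∧ C ω = c}))

/-- `A` and `B` are conditionally independent given `C` (under the pmf `p`). -/
def CondIndep {Ω α β γ : Type} [Fintype Ω] (p : Ω → ℝ)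
    (A : Ω → α) (B : Ω → β) (C : Ω → γ) : Prop :=
  ∀ (a : α) (b : β) (c : γ),
    pr p {ω | A ω = a ∧ B ω = b ∧ C ω = c} * pr p {ω | C ω = c}
      = pr p {ω | A ω = a ∧ C ω = c} * pr p {ω | B ω = b ∧ C ω = c}

/-- Trajectories of `m` processes over `n` time steps with alphabet `𝒳`:
`ω i j` is the value of process `i` at (0-indexed) time `j`. -/
abbrev Traj (m n : ℕ) (𝒳 : Type) := Fin m → Fin n → 𝒳

/-- The past `X_S^{j-1}`: the values of the processes in `S` at times strictly before `j`;
all other entries are masked by `none`. -/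
def past {m n : ℕ} {𝒳 : Type} (S : Finset (Fin m)) (j : Fin n) (ω : Traj m n 𝒳) :
    Fin m → Fin n → Option 𝒳 :=
  fun k t => if k ∈ S ∧ t < j then some (ω k t) else none

/-- Causally conditioned directed information
`I(X_S → X_i ‖ X_T) := Σ_{j=1}^{n} I(X_S^{j-1} ; X_{i,j} | X_i^{j-1}, X_T^{j-1})`. -/
noncomputable def di {m n : ℕ} {𝒳 : Type} [Fintype 𝒳] [DecidableEq 𝒳]
    (p : Traj m n 𝒳 → ℝ) (S : Finset (Fin m)) (i : Fin m) (T : Finset (Fin m)) : ℝ :=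
  ∑ j : Fin n,
    cmi p (past S j) (fun ω => ω i j) (fun ω => (past {i} j ω, past T j ω))

/-- Assumption 1: the joint distribution is strictly positive (and is a pmf), and at each
time `j` the variables `X_{1,j}, …, X_{m,j}` are mutually conditionally independent given
the full past `X_{[m]}^{j-1}` (stated in the division-free form
`P(joint ∧ past) · P(past)^{m-1} = Π_i P(X_{i,j} = x_i ∧ past)`). -/
def Assumption1 {m n : ℕ} {𝒳 : Type} [Fintype 𝒳] [DecidableEq 𝒳]
    (p : Traj m n 𝒳 → ℝ) : Prop :=
  (∀ ω, 0 < p ω) ∧ (∑ ω : Traj m n 𝒳, p ω = 1) ∧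
    ∀ (j : Fin n) (x : Fin m → 𝒳) (h : Fin m → Fin n → Option 𝒳),
      pr p {ω | (∀ i, ω i j = x i) ∧ past Finset.univ j ω = h} *
          pr p {ω | past Finset.univ j ω = h} ^ (m - 1)
        = ∏ i : Fin m, pr p {ω | ω i j = x i ∧ past Finset.univ j ω = h}

/-- `S ⊆ [m]∖{i}` is a causal Markov blanket of `X_i` if
`I(X_{[m]∖({i}∪S)} → X_i ‖ X_S) = 0`. -/
def IsCausalBlanket {m n : ℕ} {𝒳 : Type} [Fintype 𝒳] [DecidableEq 𝒳]
    (p : Traj m n 𝒳 → ℝ) (i : Fin m) (S : Finset (Fin m)) : Prop :=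
  S ⊆ Finset.univ.erase i ∧ di p (Finset.univ.erase i \ S) i S = 0

/-- A causal Markov boundary `A(i)` of `X_i` is a causal Markov blanket of minimum
cardinality. -/
def IsCausalBoundary {m n : ℕ} {𝒳 : Type} [Fintype 𝒳] [DecidableEq 𝒳]
    (p : Traj m n 𝒳 → ℝ) (i : Fin m) (A : Finset (Fin m)) : Prop :=
  IsCausalBlanket p i A ∧
    ∀ B : Finset (Fin m), IsCausalBlanket p i B → A.card ≤ B.card

lemma pr_nonneg {Ω : Type} [Fintype Ω] {p : Ω → ℝ} (hp : ∀ ω, 0 < p ω) (E : Set Ω) :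
    0 ≤ pr p E :=
  Finset.sum_nonneg fun _ _ => Set.indicator_nonneg (fun ω _ => (hp ω).le) _

lemma pr_mono {Ω : Type} [Fintype Ω] {p : Ω → ℝ} (hp : ∀ ω, 0 < p ω) {E F : Set Ω}
    (h : E ⊆ F) : pr p E ≤ pr p F :=
  Finset.sum_le_sum fun _ _ =>
    Set.indicator_le_indicator_of_subset h (fun ω => (hp ω).le) _

lemma pr_pos {Ω : Type} [Fintype Ω] {p : Ω → ℝ} (hp : ∀ ω, 0 < p ω) {E : Set Ω} {ω : Ω}
    (h : ω ∈ E) : 0 < pr p E := by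
  refine Finset.sum_pos' (fun _ _ => Set.indicator_nonneg (fun ω _ => (hp ω).le) _)
    ⟨ω, Finset.mem_univ _, ?_⟩
  rw [Set.indicator_of_mem h]
  exact hp ω

lemma pr_eq_zero_of_forall_notMem {Ω : Type} [Fintype Ω] (p : Ω → ℝ) {E : Set Ω}
    (h : ∀ ω, ω ∉ E) : pr p E = 0 :=
  Finset.sum_eq_zero fun ω _ => Set.indicator_of_notMem (h ω) _

/-- Law of total probability over the fibres of `f`. -/
lemma sum_pr_fiber {Ω α : Type} [Fintype Ω] [Fintype α] (p : Ω → ℝ) (f : Ω → α)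
    (E : Ω → Prop) : ∑ a, pr p {ω | f ω = a ∧ E ω} = pr p {ω | E ω} := by
  classical
  unfold pr
  rw [Finset.sum_comm]
  refine Finset.sum_congr rfl fun ω _ => ?_
  by_cases h : E ω <;> simp [Set.indicator_apply, h]

/-- The pointwise Gibbs inequality, with its equality case. -/
lemma sub_le_mul_log_div {x y : ℝ} (hx : 0 ≤ x) (hy : 0 ≤ y) (h : 0 < x → 0 < y) :
    x - y ≤ x * Real.log (x / y) ∧ (x * Real.log (x / y) = x - y → x = y) := by
  rcases hx.eq_or_lt with rfl | hx
  · simp only [zero_mul, zero_sub]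
    exact ⟨by linarith, fun h => by linarith⟩
  · have hy' := h hx
    have hlog : Real.log (x / y) = -Real.log (y / x) := by rw [← Real.log_inv, inv_div]
    have hmul : x * (y / x) = y := by field_simp
    rw [hlog]
    constructor
    · nlinarith [Real.log_le_sub_one_of_pos (div_pos hy' hx)]
    · intro heq
      by_contra hne
      have h1 : y / x ≠ 1 := fun h1 => hne (by rw [div_eq_one_iff_eq hx.ne'] at h1; exact h1.symm)
      nlinarith [Real.log_lt_sub_one_of_pos (div_pos hy' hx) h1]

section CondMutualInfo

variable {Ω α β γ : Type} [Fintype Ω] {p : Ω → ℝ} (A : Ω → α) (B : Ω → β) (C : Ω → γ)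

lemma cmi_term_bound (hp : ∀ ω, 0 < p ω) (a : α) (b : β) (c : γ) :
    let P := pr p {ω | A ω = a ∧ B ω = b ∧ C ω = c}
    let Q := pr p {ω | A ω = a ∧ C ω = c} * pr p {ω | B ω = b ∧ C ω = c} / pr p {ω | C ω = c}
    let T := P * Real.log (P * pr p {ω | C ω = c} /
      (pr p {ω | A ω = a ∧ C ω = c} * pr p {ω | B ω = b ∧ C ω = c}))
    P - Q ≤ T ∧ (T = P - Q → P = Q) := by
  intro P Q T
  have hT : T = P * Real.log (P / Q) := by rw [div_div_eq_mul_div]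
  have hac : P ≤ pr p {ω | A ω = a ∧ C ω = c} := pr_mono hp fun ω h => ⟨h.1, h.2.2⟩
  have hbc : P ≤ pr p {ω | B ω = b ∧ C ω = c} := pr_mono hp fun ω h => h.2
  have hc : P ≤ pr p {ω | C ω = c} := pr_mono hp fun ω h => h.2.2
  rw [hT]
  refine sub_le_mul_log_div (pr_nonneg hp _)
    (div_nonneg (mul_nonneg (pr_nonneg hp _) (pr_nonneg hp _)) (pr_nonneg hp _)) fun h => ?_
  exact div_pos (mul_pos (h.trans_le hac) (h.trans_le hbc)) (h.trans_le hc)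

variable [Fintype α] [Fintype β] [Fintype γ]

lemma sum_pr_joint : ∑ a, ∑ b, ∑ c, pr p {ω | A ω = a ∧ B ω = b ∧ C ω = c} =
    pr p {_ω | True} := by
  have h : ∀ a b, ∑ c, pr p {ω | A ω = a ∧ B ω = b ∧ C ω = c} =
      pr p {ω | B ω = b ∧ A ω = a ∧ True} := fun a b => by
    rw [← sum_pr_fiber p C]
    refine Finset.sum_congr rfl fun c _ => congrArg _ (Set.ext fun ω => ?_)
    simp only [Set.mem_ofPred_eq]
    tauto
  simp only [h, sum_pr_fiber]

lemma sum_pr_product (hp : ∀ ω, 0 < p ω) :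
    ∑ a, ∑ b, ∑ c, pr p {ω | A ω = a ∧ C ω = c} * pr p {ω | B ω = b ∧ C ω = c} /
      pr p {ω | C ω = c} = pr p {_ω | True} := by
  have h : ∀ a, ∑ b, ∑ c, pr p {ω | A ω = a ∧ C ω = c} * pr p {ω | B ω = b ∧ C ω = c} /
      pr p {ω | C ω = c} = ∑ c, pr p {ω | A ω = a ∧ C ω = c} := fun a => by
    rw [Finset.sum_comm]
    refine Finset.sum_congr rfl fun c _ => ?_
    rw [← Finset.sum_div, ← Finset.mul_sum, sum_pr_fiber p B (fun ω => C ω = c)]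
    rcases (pr_nonneg hp {ω | C ω = c}).eq_or_lt with h0 | h0
    · have : pr p {ω | A ω = a ∧ C ω = c} ≤ pr p {ω | C ω = c} := pr_mono hp fun ω h => h.2
      have := pr_nonneg hp {ω | A ω = a ∧ C ω = c}
      rw [← h0, div_zero]
      linarith
    · exact mul_div_cancel_right₀ _ h0.ne'
  simp only [h]
  rw [Finset.sum_comm]
  simp only [sum_pr_fiber p A]
  rw [← sum_pr_fiber p C]
  simp

lemma cmi_nonneg (hp : ∀ ω, 0 < p ω) : 0 ≤ cmi p A B C := by
  have h := (sum_pr_joint (p := p) A B C).trans (sum_pr_product A B C hp).symm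
  rw [← sub_eq_zero] at h
  simp only [← Finset.sum_sub_distrib] at h
  rw [← h]
  exact Finset.sum_le_sum fun a _ => Finset.sum_le_sum fun b _ => Finset.sum_le_sum fun c _ =>
    (cmi_term_bound A B C hp a b c).1

/-- Conditional mutual information vanishes exactly under conditional independence. -/
lemma cmi_eq_zero_iff (hp : ∀ ω, 0 < p ω) : cmi p A B C = 0 ↔ CondIndep p A B C := by
  constructor
  · intro h0 a b c
    have h := (sum_pr_joint (p := p) A B C).trans (sum_pr_product A B C hp).symm
    rw [← sub_eq_zero] at h
    simp only [← Finset.sum_sub_distrib] at h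
    have hle := fun a b c => (cmi_term_bound A B C hp a b c).1
    have heq := h.trans h0.symm
    rw [cmi, Finset.sum_eq_sum_iff_of_le fun a _ => Finset.sum_le_sum fun b _ =>
      Finset.sum_le_sum fun c _ => hle a b c] at heq
    have heq := heq a (Finset.mem_univ _)
    rw [Finset.sum_eq_sum_iff_of_le fun b _ => Finset.sum_le_sum fun c _ => hle a b c] at heq
    have heq := heq b (Finset.mem_univ _)
    rw [Finset.sum_eq_sum_iff_of_le fun c _ => hle a b c] at heq
    have hPQ := (cmi_term_bound A B C hp a b c).2 (heq c (Finset.mem_univ _)).symm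
    rcases (pr_nonneg hp {ω | C ω = c}).eq_or_lt with hc | hc
    · have h1 : pr p {ω | A ω = a ∧ C ω = c} ≤ pr p {ω | C ω = c} := pr_mono hp fun ω h => h.2
      have h2 : pr p {ω | A ω = a ∧ C ω = c} = 0 :=
        le_antisymm (h1.trans hc.ge) (pr_nonneg hp _)
      rw [← hc, h2, mul_zero, zero_mul]
    · rw [hPQ, div_mul_cancel₀ _ hc.ne']
  · intro h
    refine Finset.sum_eq_zero fun a _ => Finset.sum_eq_zero fun b _ =>
      Finset.sum_eq_zero fun c _ => ?_
    rw [← h a b c]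
    by_cases h0 : pr p {ω | A ω = a ∧ B ω = b ∧ C ω = c} * pr p {ω | C ω = c} = 0
    · rw [h0, div_zero, Real.log_zero, mul_zero]
    · rw [div_self h0, Real.log_one, mul_zero]

end CondMutualInfo

section Blanket

variable {m n : ℕ} {𝒳 : Type}

lemma past_eq_past_iff {S : Finset (Fin m)} {j : Fin n} {ω ω' : Traj m n 𝒳} :
    past S j ω = past S j ω' ↔ ∀ k ∈ S, ∀ t < j, ω k t = ω' k t := by
  simp only [funext_iff, past]
  refine ⟨fun h k hk t ht => by simpa [hk, ht] using h k t, fun h k t => ?_⟩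
  by_cases hkt : k ∈ S ∧ t < j
  · simp [hkt, h k hkt.1 t hkt.2]
  · simp [hkt]

/-- Replacing the value of process `i` at time `j`. -/
def setValue (i : Fin m) (j : Fin n) (x : 𝒳) (ω : Traj m n 𝒳) : Traj m n 𝒳 :=
  fun k t => if k = i ∧ t = j then x else ω k t

lemma past_setValue (S : Finset (Fin m)) (i : Fin m) (j : Fin n) (x : 𝒳) (ω : Traj m n 𝒳) :
    past S j (setValue i j x ω) = past S j ω :=
  past_eq_past_iff.2 fun _ _ _ ht => if_neg fun h => ht.ne h.2

@[simp]
lemma setValue_self (i : Fin m) (j : Fin n) (x : 𝒳) (ω : Traj m n 𝒳) :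
    setValue i j x ω i j = x := if_pos ⟨rfl, rfl⟩

lemma past_prod_eq_iff {i : Fin m} {S : Finset (Fin m)} {j : Fin n} {ω ω' : Traj m n 𝒳} :
    (past {i} j ω, past S j ω) = (past {i} j ω', past S j ω') ↔
      past (insert i S) j ω = past (insert i S) j ω' := by
  simp [past_eq_past_iff]

lemma past_compl_prod_eq_iff {i : Fin m} {S : Finset (Fin m)} {j : Fin n}
    {ω ω' : Traj m n 𝒳} :
    (past (univ.erase i \ S) j ω = past (univ.erase i \ S) j ω' ∧
      past (insert i S) j ω = past (insert i S) j ω') ↔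
      past univ j ω = past univ j ω' := by
  simp only [past_eq_past_iff]
  refine ⟨fun h k _ => ?_, fun h => ⟨fun k _ => h k (mem_univ k), fun k _ => h k (mem_univ k)⟩⟩
  by_cases hk : k ∈ insert i S
  · exact h.2 k hk
  · exact h.1 k (by simpa [not_or] using hk)

variable [Fintype 𝒳]

lemma pr_past_pos {p : Traj m n 𝒳 → ℝ} (hp : ∀ ω, 0 < p ω) (U : Finset (Fin m)) (j : Fin n)
    (ω : Traj m n 𝒳) : 0 < pr p {ω' | past U j ω' = past U j ω} :=
  pr_pos hp (ω := ω) (Eq.refl (past U j ω))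

/-- The conditional probability of the value `ω i j` given the past along `ω` of the processes
in `U`. -/
noncomputable def transProb (p : Traj m n 𝒳 → ℝ) (i : Fin m) (j : Fin n)
    (U : Finset (Fin m)) (ω : Traj m n 𝒳) : ℝ :=
  pr p {ω' | ω' i j = ω i j ∧ past U j ω' = past U j ω} / pr p {ω' | past U j ω' = past U j ω}

lemma transProb_congr (p : Traj m n 𝒳 → ℝ) {i : Fin m} {j : Fin n} {U : Finset (Fin m)}
    {ω ω' : Traj m n 𝒳} (hv : ω i j = ω' i j) (h : past U j ω = past U j ω') :
    transProb p i j U ω = transProb p i j U ω' := by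
  unfold transProb
  rw [hv, h]

lemma condIndep_past_iff {p : Traj m n 𝒳 → ℝ} (hp : ∀ ω, 0 < p ω) (i : Fin m) (j : Fin n)
    (S : Finset (Fin m)) :
    CondIndep p (past (univ.erase i \ S) j) (fun ω => ω i j)
        (fun ω => (past {i} j ω, past S j ω)) ↔
      ∀ ω, transProb p i j univ ω = transProb p i j (insert i S) ω := by
  have key : ∀ ω : Traj m n 𝒳, transProb p i j univ ω = transProb p i j (insert i S) ω ↔
      pr p {ω' | past (univ.erase i \ S) j ω' = past (univ.erase i \ S) j ω ∧ ω' i j = ω i j ∧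
          (past {i} j ω', past S j ω') = (past {i} j ω, past S j ω)} *
        pr p {ω' | (past {i} j ω', past S j ω') = (past {i} j ω, past S j ω)} =
      pr p {ω' | past (univ.erase i \ S) j ω' = past (univ.erase i \ S) j ω ∧
          (past {i} j ω', past S j ω') = (past {i} j ω, past S j ω)} *
        pr p {ω' | ω' i j = ω i j ∧
          (past {i} j ω', past S j ω') = (past {i} j ω, past S j ω)} := fun ω => by
    simp only [past_prod_eq_iff, and_left_comm (b := _ = ω i j), past_compl_prod_eq_iff]
    unfold transProb
    rw [div_eq_div_iff (pr_past_pos hp _ j ω).ne' (pr_past_pos hp _ j ω).ne',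
      mul_comm (pr p {ω' | past univ j ω' = past univ j ω})]
  constructor
  · exact fun h ω => (key ω).2 (h _ _ _)
  · intro h a b c
    by_cases hne : ∃ ω, past (univ.erase i \ S) j ω = a ∧ (past {i} j ω, past S j ω) = c
    · obtain ⟨ω, rfl, rfl⟩ := hne
      simpa [past_setValue] using (key (setValue i j b ω)).1 (h _)
    · push Not at hne
      have h1 : pr p {ω | past (univ.erase i \ S) j ω = a ∧ ω i j = b ∧
          (past {i} j ω, past S j ω) = c} = 0 :=
        pr_eq_zero_of_forall_notMem p fun ω h => hne ω h.1 h.2.2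
      have h2 : pr p {ω | past (univ.erase i \ S) j ω = a ∧ (past {i} j ω, past S j ω) = c} = 0 :=
        pr_eq_zero_of_forall_notMem p fun ω h => hne ω h.1 h.2
      rw [h1, h2, zero_mul, zero_mul]

/-- If the transition probability given the full past depends on the past of `U` only, then it is
the transition probability given the past of `U`. -/
lemma transProb_univ_eq_of_const {p : Traj m n 𝒳 → ℝ} (hp : ∀ ω, 0 < p ω) {i : Fin m}
    {j : Fin n} {U : Finset (Fin m)} {ω : Traj m n 𝒳}
    (h : ∀ ω', ω' i j = ω i j → past U j ω' = past U j ω →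
      transProb p i j univ ω' = transProb p i j univ ω) :
    transProb p i j univ ω = transProb p i j U ω := by
  rw [eq_comm, transProb, div_eq_iff (pr_past_pos hp _ j ω).ne',
    ← sum_pr_fiber p (past univ j), ← sum_pr_fiber p (past univ j), Finset.mul_sum]
  refine Finset.sum_congr rfl fun g _ => ?_
  by_cases hne : ∃ ω₁, past univ j ω₁ = g ∧ past U j ω₁ = past U j ω
  · obtain ⟨ω₁, rfl, hU⟩ := hne
    have hcompat : ∀ ω', past univ j ω' = past univ j ω₁ → past U j ω' = past U j ω :=
      fun ω' h' => (past_eq_past_iff.2 fun k _ => past_eq_past_iff.1 h' k (mem_univ k)).trans hU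
    rw [← h (setValue i j (ω i j) ω₁) (setValue_self ..) ((past_setValue ..).trans hU),
      transProb, past_setValue, setValue_self]
    have hE : {ω' | past univ j ω' = past univ j ω₁ ∧ past U j ω' = past U j ω} =
        {ω' | past univ j ω' = past univ j ω₁} :=
      Set.ext fun ω' => ⟨fun h => h.1, fun h => ⟨h, hcompat ω' h⟩⟩
    have hF : {ω' | past univ j ω' = past univ j ω₁ ∧ ω' i j = ω i j ∧
        past U j ω' = past U j ω} = {ω' | ω' i j = ω i j ∧ past univ j ω' = past univ j ω₁} :=
      Set.ext fun ω' => ⟨fun h => ⟨h.2.1, h.1⟩, fun h => ⟨h.2, h.1, hcompat ω' h.2⟩⟩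
    rw [hE, hF, div_mul_cancel₀ _ (pr_past_pos hp _ j ω₁).ne']
  · push Not at hne
    have h1 : pr p {ω' | past univ j ω' = g ∧ ω' i j = ω i j ∧ past U j ω' = past U j ω} = 0 :=
      pr_eq_zero_of_forall_notMem p fun ω h => hne ω h.1 h.2.2
    have h2 : pr p {ω' | past univ j ω' = g ∧ past U j ω' = past U j ω} = 0 :=
      pr_eq_zero_of_forall_notMem p fun ω h => hne ω h.1 h.2
    rw [h1, h2, mul_zero]

variable [DecidableEq 𝒳]

/-- A blanket is a set of processes whose past, with that of `i`, determines the transition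
probability of process `i` given the full past. -/
lemma isCausalBlanket_iff {p : Traj m n 𝒳 → ℝ} (hp : ∀ ω, 0 < p ω) {i : Fin m}
    {S : Finset (Fin m)} :
    IsCausalBlanket p i S ↔ S ⊆ univ.erase i ∧ ∀ j ω ω', ω i j = ω' i j →
      past (insert i S) j ω = past (insert i S) j ω' →
      transProb p i j univ ω = transProb p i j univ ω' := by
  unfold IsCausalBlanket di
  rw [Finset.sum_eq_zero_iff_of_nonneg fun j _ => cmi_nonneg _ _ _ hp]
  simp only [cmi_eq_zero_iff _ _ _ hp, condIndep_past_iff hp, mem_univ, true_imp_iff]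
  refine and_congr_right fun _ => ⟨fun h j ω ω' hv hU => ?_, fun h j ω => ?_⟩
  · rw [h, h, transProb_congr p hv hU]
  · exact transProb_univ_eq_of_const hp fun ω₁ => h j ω₁ ω

/-- Causal Markov blankets are closed under intersection. -/
lemma IsCausalBlanket.inter {p : Traj m n 𝒳 → ℝ} (hp : ∀ ω, 0 < p ω) {i : Fin m}
    {A B : Finset (Fin m)} (hA : IsCausalBlanket p i A) (hB : IsCausalBlanket p i B) :
    IsCausalBlanket p i (A ∩ B) := by
  rw [isCausalBlanket_iff hp] at hA hB ⊢
  refine ⟨inter_subset_left.trans hA.1, fun j ω ω' hv hU => ?_⟩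
  rw [past_eq_past_iff] at hU
  let ω'' : Traj m n 𝒳 := fun k t => if k ∈ insert i A then ω k t else ω' k t
  have hi : ω'' i j = ω i j := if_pos (mem_insert_self i A)
  refine (hA.2 j ω ω'' hi.symm (past_eq_past_iff.2 fun k hk t _ => (if_pos hk).symm)).trans
    (hB.2 j ω'' ω' (hi.trans hv) (past_eq_past_iff.2 fun k hk t ht => ?_))
  by_cases hkA : k ∈ insert i A
  · refine (if_pos hkA).trans (hU k ?_ t ht)
    simp only [mem_insert, mem_inter] at hk hkA ⊢
    tauto
  · exact if_neg hkA

end Blanket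

/-- Under Assumption 1, every causal Markov boundary of `X_i` is contained
in every causal Markov blanket of `X_i`. -/
theorem stmt_4 {m n : ℕ} (hm : 2 ≤ m) (hn : 1 ≤ n)
    {𝒳 : Type} [Fintype 𝒳] [DecidableEq 𝒳] [Nonempty 𝒳]
    (p : Traj m n 𝒳 → ℝ) (hp : Assumption1 p)
    (i : Fin m) (B A : Finset (Fin m))
    (hB : IsCausalBlanket p i B) (hA : IsCausalBoundary p i A) :
    A ⊆ B := by
  have hle := hA.2 _ (hA.1.inter hp.1 hB)
  exact inter_eq_left.1 (eq_of_subset_of_card_le inter_subset_left hle)
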